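/- arXiv:1906.00729 — 2 statements merged into one kernel-verified Lean document; each statement's English description precedes it below -/
import Mathlib

section
/- Suppose (K,L) is stabilizing, P_{K,L} is positive definite, μ := λ_min(Σ₀) > 0, and Q − LᵀRᵛL ⪰ ζ·I for some ζ > 0. Then ‖P_{K,L}‖ ≤ C(K,L)/μ and ‖Σ_{K,L}‖ ≤ C(K,L)/ζ, where ‖·‖ denotes the spectral norm. -/
/-!
Write `M` for the closed-loop matrix and `N = Q + KᵀRᵘK - LᵀRᵛL`. Two facts carry the proof: the
spectral norm of a positive semidefinite matrix is at most its trace (`specNorm_le_trace`), and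
`c * tr Y ≤ tr (X * Y)` when `X ≥ c • 1` and `Y ≥ 0` (`mul_trace_le`). The bound on `P` follows by
taking `X = Sig0`, `Y = P` and `c = lamMin Sig0`. For the bound on `Sig`, cyclicity of the trace,
applied termwise to the two series, gives `tr (Sig0 * P) = tr (Sig * N)`, and `N ≥ ζ • 1`.

Convergence of the two series needs no estimate on powers of `M`: if the series for `P` diverged,
`P` would be the junk value `0`, whose trace is not positive, and if the series for `Sig` diverged,
`Sig = 0` would satisfy the bound trivially.
-/

open Matrix

noncomputable section

/-- Spectral radius of a real square matrix: the spectral radius of its complexification. -/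
def specRad {n : ℕ} (M : Matrix (Fin n) (Fin n) ℝ) : ENNReal :=
  spectralRadius ℂ (M.map (algebraMap ℝ ℂ))

/-- Spectral (operator 2-) norm of a real matrix. -/
def specNorm {m n : ℕ} (M : Matrix (Fin m) (Fin n) ℝ) : ℝ :=
  ‖LinearMap.toContinuousLinearMap (Matrix.toEuclideanLin M)‖

/-- Smallest (real) eigenvalue of a matrix, as the infimum of its real spectrum. -/
def lamMin {n : ℕ} (M : Matrix (Fin n) (Fin n) ℝ) : ℝ :=
  sInf (spectrum ℝ M)

/-- The data of a zero-sum LQ game. -/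
structure LQ (d m₁ m₂ : ℕ) where
  A : Matrix (Fin d) (Fin d) ℝ
  B : Matrix (Fin d) (Fin m₁) ℝ
  C : Matrix (Fin d) (Fin m₂) ℝ
  Q : Matrix (Fin d) (Fin d) ℝ
  Ru : Matrix (Fin m₁) (Fin m₁) ℝ
  Rv : Matrix (Fin m₂) (Fin m₂) ℝ
  hQ : Q.PosDef
  hRu : Ru.PosDef
  hRv : Rv.PosDef

namespace LQ

variable {d m₁ m₂ : ℕ} (S : LQ d m₁ m₂)

/-- Closed-loop matrix `A - B*K - C*L`. -/
def cl (K : Matrix (Fin m₁) (Fin d) ℝ) (L : Matrix (Fin m₂) (Fin d) ℝ) :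
    Matrix (Fin d) (Fin d) ℝ :=
  S.A - S.B * K - S.C * L

/-- A pair `(K, L)` is stabilizing if `ρ(A - BK - CL) < 1`. -/
def IsStabilizing (K : Matrix (Fin m₁) (Fin d) ℝ) (L : Matrix (Fin m₂) (Fin d) ℝ) : Prop :=
  specRad (S.cl K L) < 1

/-- `P_{K,L} = Σ_{t≥0} ((A-BK-CL)ᵀ)ᵗ (Q + KᵀRᵘK - LᵀRᵛL) (A-BK-CL)ᵗ`. -/
def P (K : Matrix (Fin m₁) (Fin d) ℝ) (L : Matrix (Fin m₂) (Fin d) ℝ) :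
    Matrix (Fin d) (Fin d) ℝ :=
  ∑' t : ℕ, ((S.cl K L)ᵀ) ^ t * (S.Q + Kᵀ * S.Ru * K - Lᵀ * S.Rv * L) * (S.cl K L) ^ t

/-- `Σ_{K,L} = Σ_{t≥0} (A-BK-CL)ᵗ Sig0 ((A-BK-CL)ᵀ)ᵗ`. -/
def Sig (Sig0 : Matrix (Fin d) (Fin d) ℝ) (K : Matrix (Fin m₁) (Fin d) ℝ)
    (L : Matrix (Fin m₂) (Fin d) ℝ) : Matrix (Fin d) (Fin d) ℝ :=
  ∑' t : ℕ, (S.cl K L) ^ t * Sig0 * ((S.cl K L)ᵀ) ^ t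

/-- The cost `C(K,L) = tr(Sig0 P_{K,L})`. -/
def cost (Sig0 : Matrix (Fin d) (Fin d) ℝ) (K : Matrix (Fin m₁) (Fin d) ℝ)
    (L : Matrix (Fin m₂) (Fin d) ℝ) : ℝ :=
  (Sig0 * S.P K L).trace

/-- `E_{K,L} = (Rᵘ + Bᵀ P_{K,L} B) K - Bᵀ P_{K,L} (A - CL)`. -/
def E (K : Matrix (Fin m₁) (Fin d) ℝ) (L : Matrix (Fin m₂) (Fin d) ℝ) :
    Matrix (Fin m₁) (Fin d) ℝ :=
  (S.Ru + (S.B)ᵀ * S.P K L * S.B) * K - (S.B)ᵀ * S.P K L * (S.A - S.C * L)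

/-- `F_{K,L} = (-Rᵛ + Cᵀ P_{K,L} C) L - Cᵀ P_{K,L} (A - BK)`. -/
def F (K : Matrix (Fin m₁) (Fin d) ℝ) (L : Matrix (Fin m₂) (Fin d) ℝ) :
    Matrix (Fin m₂) (Fin d) ℝ :=
  (-S.Rv + (S.C)ᵀ * S.P K L * S.C) * L - (S.C)ᵀ * S.P K L * (S.A - S.B * K)

/-- The value function `V_{K,L}(x) = xᵀ P_{K,L} x`. -/
def V (K : Matrix (Fin m₁) (Fin d) ℝ) (L : Matrix (Fin m₂) (Fin d) ℝ) (x : Fin d → ℝ) : ℝ :=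
  x ⬝ᵥ (S.P K L *ᵥ x)

/-- The advantage function `A_{K,L}(x,u,v)`. -/
def Adv (K : Matrix (Fin m₁) (Fin d) ℝ) (L : Matrix (Fin m₂) (Fin d) ℝ)
    (x : Fin d → ℝ) (u : Fin m₁ → ℝ) (v : Fin m₂ → ℝ) : ℝ :=
  x ⬝ᵥ (S.Q *ᵥ x) + u ⬝ᵥ (S.Ru *ᵥ u) - v ⬝ᵥ (S.Rv *ᵥ v)
    + (S.A *ᵥ x + S.B *ᵥ u + S.C *ᵥ v) ⬝ᵥ (S.P K L *ᵥ (S.A *ᵥ x + S.B *ᵥ u + S.C *ᵥ v))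
    - x ⬝ᵥ (S.P K L *ᵥ x)

/-- `Ã_L = A - CL`. -/
def At (L : Matrix (Fin m₂) (Fin d) ℝ) : Matrix (Fin d) (Fin d) ℝ := S.A - S.C * L

/-- `P` satisfies the inner Riccati equation for `L`. -/
def Riccati (L : Matrix (Fin m₂) (Fin d) ℝ) (P : Matrix (Fin d) (Fin d) ℝ) : Prop :=
  P = (S.Q - Lᵀ * S.Rv * L) + (S.At L)ᵀ * P * S.At L
      - (S.At L)ᵀ * P * S.B * (S.Ru + (S.B)ᵀ * P * S.B)⁻¹ * (S.B)ᵀ * P * S.At L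

/-- `K_P(L) = (Rᵘ + BᵀPB)⁻¹ BᵀP Ã_L`. -/
def KP (L : Matrix (Fin m₂) (Fin d) ℝ) (P : Matrix (Fin d) (Fin d) ℝ) :
    Matrix (Fin m₁) (Fin d) ℝ :=
  (S.Ru + (S.B)ᵀ * P * S.B)⁻¹ * (S.B)ᵀ * P * S.At L

/-- `F_P(L) = (-Rᵛ + CᵀPC) L - CᵀP (A - B K_P(L))`. -/
def FP (L : Matrix (Fin m₂) (Fin d) ℝ) (P : Matrix (Fin d) (Fin d) ℝ) :
    Matrix (Fin m₂) (Fin d) ℝ :=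
  (-S.Rv + (S.C)ᵀ * P * S.C) * L - (S.C)ᵀ * P * (S.A - S.B * S.KP L P)

/-- `W_P(L) = Rᵛ - Cᵀ[P - PB(Rᵘ + BᵀPB)⁻¹BᵀP]C`. -/
def WP (L : Matrix (Fin m₂) (Fin d) ℝ) (P : Matrix (Fin d) (Fin d) ℝ) :
    Matrix (Fin m₂) (Fin m₂) ℝ :=
  S.Rv - (S.C)ᵀ * (P - P * S.B * (S.Ru + (S.B)ᵀ * P * S.B)⁻¹ * (S.B)ᵀ * P) * S.C

end LQ

/-- A real positive semidefinite matrix is a Gram matrix `Bᵀ * B`. -/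
theorem exists_gram {n : ℕ} {X : Matrix (Fin n) (Fin n) ℝ} (hX : X.PosSemidef) :
    ∃ B : Matrix (Fin n) (Fin n) ℝ, X = Bᵀ * B := by
  open scoped MatrixOrder in
  obtain ⟨B, hB⟩ := CStarAlgebra.nonneg_iff_eq_star_mul_self.mp hX.nonneg
  exact ⟨B, by simpa [Matrix.star_eq_conjTranspose, conjTranspose_eq_transpose_of_trivial] using hB⟩

theorem trace_mul_nonneg {n : ℕ} {X Y : Matrix (Fin n) (Fin n) ℝ}
    (hX : X.PosSemidef) (hY : Y.PosSemidef) : 0 ≤ (X * Y).trace := by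
  obtain ⟨B, rfl⟩ := exists_gram hX
  have h := (hY.mul_mul_conjTranspose_same B).trace_nonneg
  rwa [conjTranspose_eq_transpose_of_trivial, trace_mul_comm, ← mul_assoc] at h

/-- Monotonicity of the trace pairing: `c • 1 ≤ X` gives `c * tr Y ≤ tr (X * Y)` for `Y ≥ 0`. -/
theorem mul_trace_le {n : ℕ} {X Y : Matrix (Fin n) (Fin n) ℝ} {c : ℝ}
    (hX : (X - c • (1 : Matrix (Fin n) (Fin n) ℝ)).PosSemidef) (hY : Y.PosSemidef) :
    c * Y.trace ≤ (X * Y).trace := by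
  have h := trace_mul_nonneg hX hY
  simp only [sub_mul, smul_mul_assoc, one_mul, trace_sub, trace_smul, smul_eq_mul] at h
  linarith

/-- The spectral norm is dominated by the Frobenius norm, in squared form. -/
theorem sum_mulVec_sq_le {n : ℕ} (B : Matrix (Fin n) (Fin n) ℝ) (x : Fin n → ℝ) :
    ∑ i, (B *ᵥ x) i ^ 2 ≤ (Bᵀ * B).trace * ∑ i, x i ^ 2 := by
  have h : (Bᵀ * B).trace = ∑ i, ∑ j, B i j ^ 2 := by
    rw [Finset.sum_comm]
    simp [Matrix.trace, Matrix.mul_apply, sq]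
  rw [h, Finset.sum_mul]
  refine Finset.sum_le_sum fun i _ => ?_
  simpa only [mulVec, dotProduct] using Finset.sum_mul_sq_le_sq_mul_sq Finset.univ (B i) x

/-- For `X = Bᵀ * B`, both factors have squared spectral norm at most the squared Frobenius norm
`tr X` of `B`. -/
theorem specNorm_le_trace {n : ℕ} {X : Matrix (Fin n) (Fin n) ℝ} (hX : X.PosSemidef) :
    specNorm X ≤ X.trace := by
  have h0 := hX.trace_nonneg
  refine ContinuousLinearMap.opNorm_le_bound _ h0 fun x => ?_
  obtain ⟨B, rfl⟩ := exists_gram hX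
  have h1 := sum_mulVec_sq_le B x.ofLp
  have h2 := sum_mulVec_sq_le Bᵀ (B *ᵥ x.ofLp)
  rw [transpose_transpose, trace_mul_comm, mulVec_mulVec] at h2
  refine le_of_sq_le_sq ?_ (by positivity)
  rw [mul_pow, EuclideanSpace.real_norm_sq_eq, EuclideanSpace.real_norm_sq_eq]
  simp only [LinearMap.coe_toContinuousLinearMap', Matrix.ofLp_toLpLin, Matrix.toLin'_apply]
  nlinarith [mul_le_mul_of_nonneg_left h1 h0]

theorem sub_lamMin_posSemidef {n : ℕ} {X : Matrix (Fin n) (Fin n) ℝ} (hX : X.PosDef) :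
    (X - lamMin X • (1 : Matrix (Fin n) (Fin n) ℝ)).PosSemidef := by
  rw [← Algebra.algebraMap_eq_smul_one, posSemidef_iff_isHermitian_and_spectrum_nonneg]
  refine ⟨?_, ?_⟩
  · rw [Algebra.algebraMap_eq_smul_one]
    exact hX.isHermitian.sub (by simp [Matrix.IsHermitian])
  · rw [← spectrum.sub_singleton_eq]
    rintro _ ⟨a, ha, _, rfl, rfl⟩
    exact sub_nonneg.mpr (csInf_le (Matrix.finite_spectrum X).bddBelow ha)

theorem hasSum_trace_mul {n : ℕ} {f : ℕ → Matrix (Fin n) (Fin n) ℝ}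
    {X : Matrix (Fin n) (Fin n) ℝ} (hf : HasSum f X) (Y : Matrix (Fin n) (Fin n) ℝ) :
    HasSum (fun t => (f t * Y).trace) (X * Y).trace :=
  (hf.mul_right Y).map (traceAddMonoidHom (Fin n) ℝ) continuous_id.matrix_trace

theorem posSemidef_of_hasSum {n : ℕ} {f : ℕ → Matrix (Fin n) (Fin n) ℝ}
    {X : Matrix (Fin n) (Fin n) ℝ} (hf : HasSum f X) (h : ∀ t, (f t).PosSemidef) :
    X.PosSemidef := by
  refine .of_dotProduct_mulVec_nonneg ?_ fun x => ?_
  · have h1 := hf.matrix_conjTranspose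
    simp only [fun t => (h t).isHermitian.eq] at h1
    exact h1.unique hf
  · have key : ∀ Z : Matrix (Fin n) (Fin n) ℝ,
        star x ⬝ᵥ (Z *ᵥ x) = (Z * vecMulVec x (star x)).trace := fun Z => by
      rw [mul_vecMulVec, trace_vecMulVec, dotProduct_comm]
    rw [key]
    refine (hasSum_trace_mul hf _).nonneg fun t => ?_
    rw [← key]
    exact (h t).dotProduct_mulVec_nonneg x

open LQ in
/-- Norm bounds: if `(K,L)` is stabilizing, `P_{K,L} ≻ 0`, `μ = λ_min(Σ₀) > 0` and
`Q - LᵀRᵛL ⪰ ζ·I` with `ζ > 0`, then `‖P_{K,L}‖ ≤ C(K,L)/μ` and `‖Σ_{K,L}‖ ≤ C(K,L)/ζ`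
(spectral norms). -/
theorem P_Sigma_norm_bounds {d m₁ m₂ : ℕ} (S : LQ d m₁ m₂)
    (Sig0 : Matrix (Fin d) (Fin d) ℝ) (hSig0 : Sig0.PosDef)
    (K : Matrix (Fin m₁) (Fin d) ℝ) (L : Matrix (Fin m₂) (Fin d) ℝ)
    (hKL : S.IsStabilizing K L) (hP : (S.P K L).PosDef)
    (hμ : 0 < lamMin Sig0) (ζ : ℝ) (hζ : 0 < ζ)
    (hQL : ((S.Q - Lᵀ * S.Rv * L) - ζ • (1 : Matrix (Fin d) (Fin d) ℝ)).PosSemidef) :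
    specNorm (S.P K L) ≤ S.cost Sig0 K L / lamMin Sig0 ∧
    specNorm (S.Sig Sig0 K L) ≤ S.cost Sig0 K L / ζ := by
  have hSub := sub_lamMin_posSemidef hSig0
  have hcost : 0 ≤ S.cost Sig0 K L := trace_mul_nonneg hSig0.posSemidef hP.posSemidef
  refine ⟨?_, ?_⟩
  · rw [le_div_iff₀ hμ, mul_comm]
    exact (mul_le_mul_of_nonneg_left (specNorm_le_trace hP.posSemidef) hμ.le).trans
      (mul_trace_le hSub hP.posSemidef)
  · by_cases hs : Summable fun t : ℕ => (S.cl K L) ^ t * Sig0 * ((S.cl K L)ᵀ) ^ t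
    swap
    · have h0 : S.Sig Sig0 K L = 0 := tsum_eq_zero_of_not_summable hs
      rw [h0, specNorm, map_zero, map_zero, norm_zero]
      positivity
    -- In dimension zero the real spectrum is empty and `lamMin` is `sInf ∅ = 0`.
    have : Nonempty (Fin d) := by
      rw [← not_isEmpty_iff]
      intro hd
      have := Matrix.subsingleton_of_empty_left (m := Fin d) (n := Fin d) (α := ℝ)
      rw [lamMin, spectrum.of_subsingleton, Real.sInf_empty] at hμ
      exact hμ.false
    have hPs : Summable fun t : ℕ => ((S.cl K L)ᵀ) ^ t *
        (S.Q + Kᵀ * S.Ru * K - Lᵀ * S.Rv * L) * (S.cl K L) ^ t := by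
      by_contra h
      have h0 : S.P K L = 0 := tsum_eq_zero_of_not_summable h
      have := hP.trace_pos
      simp [h0] at this
    have hSig : (S.Sig Sig0 K L).PosSemidef := by
      refine posSemidef_of_hasSum hs.hasSum fun t => ?_
      have := hSig0.posSemidef.mul_mul_conjTranspose_same ((S.cl K L) ^ t)
      rwa [conjTranspose_eq_transpose_of_trivial, transpose_pow] at this
    have hN : ((S.Q + Kᵀ * S.Ru * K - Lᵀ * S.Rv * L)
        - ζ • (1 : Matrix (Fin d) (Fin d) ℝ)).PosSemidef := by
      have := hQL.add (S.hRu.posSemidef.conjTranspose_mul_mul_same K)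
      rw [conjTranspose_eq_transpose_of_trivial] at this
      convert this using 1
      abel
    have hdual : S.cost Sig0 K L = ((S.Q + Kᵀ * S.Ru * K - Lᵀ * S.Rv * L) *
        S.Sig Sig0 K L).trace := by
      rw [LQ.cost, trace_mul_comm, trace_mul_comm _ (S.Sig Sig0 K L)]
      have h1 := hasSum_trace_mul hPs.hasSum Sig0
      have h2 := hasSum_trace_mul hs.hasSum (S.Q + Kᵀ * S.Ru * K - Lᵀ * S.Rv * L)
      have hterm : ∀ t : ℕ, (((S.cl K L)ᵀ) ^ t * (S.Q + Kᵀ * S.Ru * K - Lᵀ * S.Rv * L) *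
          (S.cl K L) ^ t * Sig0).trace = ((S.cl K L) ^ t * Sig0 * ((S.cl K L)ᵀ) ^ t *
          (S.Q + Kᵀ * S.Ru * K - Lᵀ * S.Rv * L)).trace := fun t => by
        rw [mul_assoc, trace_mul_comm, ← mul_assoc]
      simp only [hterm] at h1
      exact h1.unique h2
    rw [le_div_iff₀ hζ, mul_comm, hdual]
    exact (mul_le_mul_of_nonneg_left (specNorm_le_trace hSig) hζ.le).trans (mul_trace_le hN hSig)
end
end

section
/- Let L, L′ ∈ ℝ^{m₂×d}, and let P, P′ be symmetric positive definite matrices satisfying the inner Riccati equation for L and L′ respectively, with ρ(Ã_L − B·K_P(L)) < 1 and ρ(Ã_{L′} − B·K_{P′}(L′)) < 1. Then for every x ∈ ℝ^d, with trajectory x₀ = x, x_{t+1} = (A − B·K_{P′}(L′) − CL′)x_t and Γ := Σ_{t≥0} x_t x_tᵀ, one has xᵀP′x − xᵀPx ≥ 2·tr[Γ(L′−L)ᵀF_P(L)] − tr[Γ(L′−L)ᵀW_P(L)(L′−L)]. -/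
/-! The trajectory is generated by the closed-loop matrix `M = A - B K' - C L'`, `K' = K_{P'}(L')`.
The difference `P' - P` satisfies a Lyapunov equation along `M`, which is then summed along the
trajectory.

Completing the square in the first player's gain (`complete_square`) turns the Riccati equation for
`P'` into the Lyapunov equation `P' = Q + K'ᵀ Rᵘ K' - L'ᵀ Rᵛ L' + Mᵀ P' M`. The same identity for
`P`, with `Δ = L' - L` and `J = (Rᵘ + BᵀPB)⁻¹ BᵀP Ã_{L'}`, gives (`lyapunov_difference`)
`(P' - P) - Mᵀ (P' - P) M = ΔᵀF_P + F_PᵀΔ - ΔᵀW_PΔ + (K' - J)ᵀ (Rᵘ + BᵀPB) (K' - J)`.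
Since `ρ(M) < 1`, Gelfand's formula makes the series `Γ = Σ x_t x_tᵀ` converge, and it satisfies
`Γ = x xᵀ + M Γ Mᵀ`. Pairing the displayed identity with `Γ` under the trace makes the left side
`xᵀ(P' - P)x`, and the last term on the right is nonnegative because it is a sum of values of the
quadratic form of `Rᵘ + BᵀPB`. -/

open Matrix

noncomputable section

/-- Gelfand's formula in coordinates: if `ρ(M) < 1`, the entries of `M ^ t` decay geometrically. -/
lemma exists_entry_bound {n : ℕ} (M : Matrix (Fin n) (Fin n) ℝ) (h : specRad M < 1) :
    ∃ r : ℝ, 0 ≤ r ∧ r < 1 ∧ ∀ᶠ t in Filter.atTop, ∀ i j, |(M ^ t) i j| ≤ r ^ t := by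
  let _ : NormedRing (Matrix (Fin n) (Fin n) ℂ) := Matrix.linftyOpNormedRing
  let _ : NormedAlgebra ℂ (Matrix (Fin n) (Fin n) ℂ) := Matrix.linftyOpNormedAlgebra
  have _ : CompleteSpace (Matrix (Fin n) (Fin n) ℂ) := FiniteDimensional.complete ℂ _
  set N := M.map (algebraMap ℝ ℂ) with hN
  have hg := spectrum.pow_nnnorm_pow_one_div_tendsto_nhds_spectralRadius N
  obtain ⟨r, hr, hr1⟩ := ENNReal.lt_iff_exists_nnreal_btwn.1 (show spectralRadius ℂ N < 1 from h)
  refine ⟨r, r.2, by exact_mod_cast hr1, ?_⟩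
  filter_upwards [hg.eventually_lt_const hr, Filter.eventually_gt_atTop 0] with t ht ht0 i j
  have hpow : (‖N ^ t‖₊ : ENNReal) ≤ (r : ENNReal) ^ t := by
    have h1 := pow_le_pow_left₀ (zero_le) ht.le t
    rwa [← ENNReal.rpow_natCast, ← ENNReal.rpow_mul, one_div,
      inv_mul_cancel₀ (by exact_mod_cast ht0.ne'), ENNReal.rpow_one] at h1
  have hpow' : ‖N ^ t‖₊ ≤ r ^ t := by exact_mod_cast hpow
  have hmap : N ^ t = (M ^ t).map (algebraMap ℝ ℂ) := by
    rw [hN, ← RingHom.mapMatrix_apply, ← RingHom.mapMatrix_apply, map_pow]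
  have hentry : ‖(N ^ t) i j‖₊ ≤ ‖N ^ t‖₊ := by
    rw [Matrix.linfty_opNNNorm_def]
    exact (Finset.single_le_sum (f := fun j => ‖(N ^ t) i j‖₊) (fun _ _ => zero_le)
      (Finset.mem_univ j)).trans
      (Finset.le_sup (f := fun i => ∑ j, ‖(N ^ t) i j‖₊) (Finset.mem_univ i))
  have h3 : ‖(N ^ t) i j‖ ≤ (r : ℝ) ^ t := by exact_mod_cast hentry.trans hpow'
  rw [hmap] at h3
  simpa using h3

lemma summable_vecMulVec {n : ℕ} (M : Matrix (Fin n) (Fin n) ℝ) (h : specRad M < 1)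
    (x : Fin n → ℝ) :
    Summable fun t : ℕ => vecMulVec (M ^ t *ᵥ x) (M ^ t *ᵥ x) := by
  obtain ⟨r, hr0, hr1, hr⟩ := exists_entry_bound M h
  have hv : ∀ᶠ t : ℕ in Filter.atTop, ∀ i, |(M ^ t *ᵥ x) i| ≤ r ^ t * ∑ j, |x j| := by
    filter_upwards [hr] with t ht i
    rw [Matrix.mulVec, dotProduct, Finset.mul_sum]
    refine (Finset.abs_sum_le_sum_abs _ _).trans (Finset.sum_le_sum fun j _ => ?_)
    rw [abs_mul]
    exact mul_le_mul_of_nonneg_right (ht i j) (abs_nonneg _)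
  refine Pi.summable.2 fun i => Pi.summable.2 fun j => ?_
  have hs : Summable fun t : ℕ => (r * r) ^ t * ((∑ j, |x j|) * ∑ j, |x j|) :=
    (summable_geometric_of_lt_one (mul_nonneg hr0 hr0) (by nlinarith)).mul_right _
  refine Summable.of_norm_bounded_eventually_nat hs ?_
  filter_upwards [hv] with t ht
  rw [vecMulVec_apply, Real.norm_eq_abs, abs_mul, mul_pow, mul_mul_mul_comm]
  exact mul_le_mul (ht i) (ht j) (abs_nonneg _) ((abs_nonneg _).trans (ht i))

lemma trace_vecMulVec_mul {n : ℕ} (v : Fin n → ℝ) (X : Matrix (Fin n) (Fin n) ℝ) :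
    (vecMulVec v v * X).trace = v ⬝ᵥ (X *ᵥ v) := by
  rw [vecMulVec_mul, trace_vecMulVec, dotProduct_mulVec, dotProduct_comm]

/-- Completing the square in the gain `K`; `J` is the critical point of the quadratic function of `K`
on the left, as `hJ` says. -/
lemma complete_square {d m : ℕ} (P T : Matrix (Fin d) (Fin d) ℝ) (B : Matrix (Fin d) (Fin m) ℝ)
    (R : Matrix (Fin m) (Fin m) ℝ) (K J : Matrix (Fin m) (Fin d) ℝ) (hP : Pᵀ = P) (hR : Rᵀ = R)
    (hJ : (R + Bᵀ * P * B) * J = Bᵀ * P * T) :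
    Kᵀ * R * K + (T - B * K)ᵀ * P * (T - B * K)
      = Tᵀ * P * T - Tᵀ * P * B * J + (K - J)ᵀ * (R + Bᵀ * P * B) * (K - J) := by
  have hJ' : Jᵀ * (R + Bᵀ * P * B) = Tᵀ * P * B := by
    have := congrArg Matrix.transpose hJ
    simpa [Matrix.transpose_mul, hP, hR, Matrix.mul_assoc] using this
  have e : (K - J)ᵀ * (R + Bᵀ * P * B) * (K - J)
      = Kᵀ * (R + Bᵀ * P * B) * K - Kᵀ * (Bᵀ * P * T) - Tᵀ * P * B * K + Tᵀ * P * B * J := by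
    rw [Matrix.transpose_sub, Matrix.sub_mul, hJ', Matrix.mul_sub, Matrix.sub_mul, Matrix.sub_mul,
      Matrix.mul_assoc Kᵀ _ J, hJ]
    abel
  rw [e]
  simp only [Matrix.transpose_sub, Matrix.transpose_mul, Matrix.sub_mul, Matrix.mul_sub,
    Matrix.mul_add, Matrix.add_mul, Matrix.mul_assoc]
  abel

namespace LQ

variable {d m₁ m₂ : ℕ} (S : LQ d m₁ m₂)

lemma posDef_gain {P : Matrix (Fin d) (Fin d) ℝ} (hP : P.PosDef) :
    (S.Ru + (S.B)ᵀ * P * S.B).PosDef := by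
  refine S.hRu.add_posSemidef ?_
  simpa using hP.posSemidef.conjTranspose_mul_mul_same S.B

lemma gain_mul_KP {P : Matrix (Fin d) (Fin d) ℝ} (hP : P.PosDef)
    (L : Matrix (Fin m₂) (Fin d) ℝ) :
    (S.Ru + (S.B)ᵀ * P * S.B) * S.KP L P = (S.B)ᵀ * P * S.At L := by
  have hu := (Matrix.isUnit_iff_isUnit_det _).1 (S.posDef_gain hP).isUnit
  simp only [KP, Matrix.mul_assoc]
  rw [Matrix.mul_nonsing_inv_cancel_left _ _ (by simpa only [Matrix.mul_assoc] using hu)]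

/-- The Riccati equation of `P` in Lyapunov form. -/
lemma Riccati.lyapunov {P : Matrix (Fin d) (Fin d) ℝ} (hP : P.PosDef)
    {L : Matrix (Fin m₂) (Fin d) ℝ} (h : S.Riccati L P) :
    P = S.Q - Lᵀ * S.Rv * L + ((S.KP L P)ᵀ * S.Ru * S.KP L P
      + (S.At L - S.B * S.KP L P)ᵀ * P * (S.At L - S.B * S.KP L P)) := by
  rw [complete_square P (S.At L) S.B S.Ru _ _ (by simpa using hP.isHermitian.eq)
    (by simpa using S.hRu.isHermitian.eq) (S.gain_mul_KP hP L)]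
  conv_lhs => rw [h]
  simp only [KP, Matrix.mul_assoc, sub_self, Matrix.mul_zero]
  abel

/-- The Lyapunov defect of `P' - P` along the closed loop of `(K_{P'}(L'), L')`. -/
lemma lyapunov_difference {L L' : Matrix (Fin m₂) (Fin d) ℝ} {P P' : Matrix (Fin d) (Fin d) ℝ}
    (hP : P.PosDef) (hP' : P'.PosDef) (hric : S.Riccati L P) (hric' : S.Riccati L' P') :
    (P' - P) - (S.At L' - S.B * S.KP L' P')ᵀ * (P' - P) * (S.At L' - S.B * S.KP L' P')
      = (L' - L)ᵀ * S.FP L P + (S.FP L P)ᵀ * (L' - L) - (L' - L)ᵀ * S.WP L P * (L' - L)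
        + (S.KP L' P' - S.KP L' P)ᵀ * (S.Ru + (S.B)ᵀ * P * S.B)
          * (S.KP L' P' - S.KP L' P) := by
  have hPt : Pᵀ = P := by simpa using hP.isHermitian.eq
  have hRt : (S.Ru)ᵀ = S.Ru := by simpa using S.hRu.isHermitian.eq
  have hVt : (S.Rv)ᵀ = S.Rv := by simpa using S.hRv.isHermitian.eq
  -- `N` is the Schur complement left after the first player's control is minimized out.
  obtain ⟨N, hN⟩ : ∃ N, N = P - P * S.B * (S.Ru + (S.B)ᵀ * P * S.B)⁻¹ * (S.B)ᵀ * P := ⟨_, rfl⟩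
  have hly := Riccati.lyapunov S hP' hric'
  have hsq := complete_square P (S.At L') S.B S.Ru (S.KP L' P') _ hPt hRt (S.gain_mul_KP hP L')
  have hNt : Nᵀ = N := by
    rw [hN]
    simp [Matrix.transpose_mul, Matrix.transpose_nonsing_inv, hPt, hRt, Matrix.mul_assoc]
  have hW : S.WP L P = S.Rv - (S.C)ᵀ * N * S.C := by rw [hN]; rfl
  have hF : S.FP L P = -(S.Rv * L) - (S.C)ᵀ * N * S.At L := by
    rw [hN]
    simp only [FP, KP, At, Matrix.mul_sub, Matrix.sub_mul, Matrix.add_mul, Matrix.neg_mul,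
      Matrix.mul_assoc]
    abel
  have hmin : (S.At L')ᵀ * P * S.At L' - (S.At L')ᵀ * P * S.B * S.KP L' P
      = (S.At L')ᵀ * N * S.At L' := by
    rw [hN]
    simp only [KP, Matrix.mul_sub, Matrix.sub_mul, Matrix.mul_assoc]
  have hPN : P = S.Q - Lᵀ * S.Rv * L + (S.At L)ᵀ * N * S.At L := by
    conv_lhs => rw [hric]
    rw [hN]
    simp only [Matrix.mul_sub, Matrix.sub_mul, Matrix.mul_assoc]
    abel
  have hAt : S.At L' = S.At L - S.C * (L' - L) := by
    simp only [At, Matrix.mul_sub]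
    abel
  rw [hmin] at hsq
  have hlhs : (P' - P) - (S.At L' - S.B * S.KP L' P')ᵀ * (P' - P) * (S.At L' - S.B * S.KP L' P')
      = S.Q - L'ᵀ * S.Rv * L' + ((S.KP L' P')ᵀ * S.Ru * S.KP L' P'
        + (S.At L' - S.B * S.KP L' P')ᵀ * P * (S.At L' - S.B * S.KP L' P')) - P := by
    generalize S.At L' - S.B * S.KP L' P' = M at hly ⊢
    rw [Matrix.mul_sub, Matrix.sub_mul]
    nth_rewrite 1 [hly]
    abel
  rw [hlhs, hsq]
  refine (congrArg (_ - ·) hPN).trans ?_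
  -- The square is kept as a single term; the remaining identity involves only `N`, `L` and `D`.
  generalize (S.KP L' P' - S.KP L' P)ᵀ * (S.Ru + (S.B)ᵀ * P * S.B)
    * (S.KP L' P' - S.KP L' P) = Z at *
  clear hsq hlhs hly hmin
  have hL : L' = L + (L' - L) := by abel
  rw [hF, hW, hAt]
  generalize L' - L = D at *
  subst hL
  simp only [Matrix.transpose_sub, Matrix.transpose_add, Matrix.transpose_neg,
    Matrix.transpose_mul, Matrix.transpose_transpose, hNt, hVt, Matrix.mul_sub, Matrix.sub_mul,
    Matrix.mul_add, Matrix.add_mul, Matrix.neg_mul, Matrix.mul_neg, Matrix.mul_assoc]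
  abel

end LQ

open LQ in
/-- Value-difference lower bound between inner Riccati solutions: with
`Γ = Σ_t x_t x_tᵀ` along the trajectory of `(K_{P'}(L'), L')` started at `x`,
`xᵀP'x - xᵀPx ≥ 2 tr[Γ(L'-L)ᵀF_P(L)] - tr[Γ(L'-L)ᵀW_P(L)(L'-L)]`. -/
theorem value_difference_lower_bound {d m₁ m₂ : ℕ} (S : LQ d m₁ m₂)
    (L L' : Matrix (Fin m₂) (Fin d) ℝ) (P P' : Matrix (Fin d) (Fin d) ℝ)
    (hP : P.PosDef) (hP' : P'.PosDef)
    (hric : S.Riccati L P) (hric' : S.Riccati L' P')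
    (hstab : specRad (S.At L - S.B * S.KP L P) < 1)
    (hstab' : specRad (S.At L' - S.B * S.KP L' P') < 1)
    (x : Fin d → ℝ) :
    2 * ((∑' t : ℕ, vecMulVec ((S.A - S.B * S.KP L' P' - S.C * L') ^ t *ᵥ x)
            ((S.A - S.B * S.KP L' P' - S.C * L') ^ t *ᵥ x)) * (L' - L)ᵀ * S.FP L P).trace
      - ((∑' t : ℕ, vecMulVec ((S.A - S.B * S.KP L' P' - S.C * L') ^ t *ᵥ x)
            ((S.A - S.B * S.KP L' P' - S.C * L') ^ t *ᵥ x)) * (L' - L)ᵀ * S.WP L P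
            * (L' - L)).trace
      ≤ x ⬝ᵥ (P' *ᵥ x) - x ⬝ᵥ (P *ᵥ x) := by
  have hM : S.A - S.B * S.KP L' P' - S.C * L' = S.At L' - S.B * S.KP L' P' := by
    simp only [At]
    abel
  have hD := S.lyapunov_difference hP hP' hric hric'
  rw [hM]
  generalize S.At L' - S.B * S.KP L' P' = M at *
  have hs := summable_vecMulVec M hstab' x
  obtain ⟨Γ, hΓ⟩ : ∃ Γ, Γ = ∑' t : ℕ, vecMulVec (M ^ t *ᵥ x) (M ^ t *ᵥ x) := ⟨_, rfl⟩
  have hsum := hs.hasSum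
  rw [← hΓ] at hsum ⊢
  have hΓt : Γᵀ = Γ := by
    rw [hΓ, Matrix.transpose_tsum]
    simp only [transpose_vecMulVec]
  have hstein : Γ = vecMulVec x x + M * Γ * Mᵀ := by
    conv_lhs => rw [hΓ, hs.tsum_eq_zero_add]
    congr 1
    · simp
    · rw [hΓ, ← hs.tsum_mul_left, ← (hs.mul_left M).tsum_mul_right]
      congr 1
      funext t
      rw [mul_vecMulVec, vecMulVec_mul, vecMul_transpose, mulVec_mulVec, pow_succ']
  have htr : (Γ * (P' - P - Mᵀ * (P' - P) * M)).trace = x ⬝ᵥ (P' *ᵥ x) - x ⬝ᵥ (P *ᵥ x) := by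
    have h1 : (Γ * (P' - P)).trace
        = x ⬝ᵥ ((P' - P) *ᵥ x) + (Γ * (Mᵀ * (P' - P) * M)).trace := by
      conv_lhs => rw [hstein]
      rw [Matrix.add_mul, trace_add, trace_vecMulVec_mul]
      congr 1
      rw [Matrix.mul_assoc, Matrix.mul_assoc, trace_mul_comm]
      simp only [Matrix.mul_assoc]
    rw [Matrix.mul_sub, trace_sub, h1, sub_mulVec, dotProduct_sub]
    ring
  have hpsd := (S.posDef_gain hP).posSemidef.conjTranspose_mul_mul_same
    (S.KP L' P' - S.KP L' P)
  rw [conjTranspose_eq_transpose_of_trivial] at hpsd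
  have hnn : 0 ≤ (Γ * ((S.KP L' P' - S.KP L' P)ᵀ * (S.Ru + (S.B)ᵀ * P * S.B)
      * (S.KP L' P' - S.KP L' P))).trace := by
    generalize (S.KP L' P' - S.KP L' P)ᵀ * (S.Ru + (S.B)ᵀ * P * S.B)
      * (S.KP L' P' - S.KP L' P) = X at hpsd
    refine ((hsum.mul_right X).map (Matrix.traceAddMonoidHom (Fin d) ℝ)
      (continuous_id.matrix_trace)).nonneg fun t => ?_
    have := hpsd.dotProduct_mulVec_nonneg (M ^ t *ᵥ x)
    rw [star_trivial] at this
    exact this.trans_eq (trace_vecMulVec_mul _ X).symm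
  have hsym : (Γ * ((S.FP L P)ᵀ * (L' - L))).trace = (Γ * ((L' - L)ᵀ * S.FP L P)).trace := by
    rw [← trace_transpose]
    simp only [transpose_mul, transpose_transpose, hΓt]
    rw [trace_mul_comm]
  rw [hD, Matrix.mul_add, Matrix.mul_sub, Matrix.mul_add, trace_add, trace_sub, trace_add,
    hsym] at htr
  simp only [Matrix.mul_assoc] at htr hnn ⊢
  linarith
end
end
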